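/- Let (g, δ, S) be a Nijenhuis Lie coalgebra over a field k. Then for all natural numbers k, l ≥ 0: (1) S^k is a Nijenhuis operator on the Lie coalgebra (g, δ); (2) S^l is a Nijenhuis operator on the deformed Lie coalgebra (g, δ_{S^k}); and (3) the deformed Lie coalgebras (g, (δ_{S^k})_{S^l}) and (g, δ_{S^{k+l}}) coincide, i.e. (δ_{S^k})_{S^l} = δ_{S^{k+l}} as maps g → g ⊗ g. -/

import Mathlib

/-!
On the space `M = Hom(g, g ⊗ g)` consider the three operators
`L = (S ⊗ id) ∘ -`, `R = (id ⊗ S) ∘ -` and `C = - ∘ S`. They commute pairwise, so the algebra they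
generate is commutative. The Nijenhuis condition on `S` reads `(L - C)(R - C) δ = 0`, the deformed
coproduct is `δ_{S^a} = (L^a + R^a - C^a) δ`, and all three claims become membership statements in
the principal ideal generated by `(L - C)(R - C)`:

* `(L^i - C^i)(R^j - C^j)` is a multiple of `(L - C)(R - C)`, since `x - y ∣ x^n - y^n`;
* `(L^b + R^b - C^b)(L^a + R^a - C^a) - (L^{a+b} + R^{a+b} - C^{a+b})` equals
  `(L^b - C^b)(R^a - C^a) + (L^a - C^a)(R^b - C^b)`.
-/

open TensorProduct

noncomputable section

/-- The cyclic permutation `x ⊗ y ⊗ z ↦ y ⊗ z ⊗ x` on `g ⊗ (g ⊗ g)`. -/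
def cyc (K : Type*) [Field K] (g : Type*) [AddCommGroup g] [Module K g] :
    g ⊗[K] (g ⊗[K] g) →ₗ[K] g ⊗[K] (g ⊗[K] g) :=
  (LinearMap.lTensor g (TensorProduct.comm K g g).toLinearMap) ∘ₗ
    (TensorProduct.leftComm K g g g).toLinearMap

/-- The coproduct deformed by a linear map `T`:
`δ_T(x) = (T ⊗ id + id ⊗ T)(δ x) − δ(T x)`. -/
def deformCo {K : Type*} [Field K] {g : Type*} [AddCommGroup g] [Module K g]
    (δ : g →ₗ[K] g ⊗[K] g) (T : g →ₗ[K] g) : g →ₗ[K] g ⊗[K] g :=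
  (LinearMap.rTensor g T + LinearMap.lTensor g T) ∘ₗ δ - δ ∘ₗ T

/-- `T` is a Nijenhuis operator on the Lie coalgebra with coproduct `c`. -/
def IsCoNijenhuis {K : Type*} [Field K] {g : Type*} [AddCommGroup g] [Module K g]
    (c : g →ₗ[K] g ⊗[K] g) (T : g →ₗ[K] g) : Prop :=
  ∀ x : g,
    TensorProduct.map T T (c x) =
      (LinearMap.rTensor g T + LinearMap.lTensor g T) (c (T x)) - c (T (T x))

section CommutingOperators

variable {A : Type*} [CommRing A] (L R C : A)

theorem sub_mul_sub_dvd_pow (i j : ℕ) :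
    (L - C) * (R - C) ∣ (L ^ i - C ^ i) * (R ^ j - C ^ j) :=
  mul_dvd_mul (sub_dvd_pow_sub_pow L C i) (sub_dvd_pow_sub_pow R C j)

theorem sub_mul_sub_dvd_deform (a b : ℕ) :
    (L - C) * (R - C) ∣ (L ^ b + R ^ b - C ^ b) * (L ^ a + R ^ a - C ^ a) -
      (L ^ (a + b) + R ^ (a + b) - C ^ (a + b)) := by
  have h := dvd_add (sub_mul_sub_dvd_pow L R C b a) (sub_mul_sub_dvd_pow L R C a b)
  convert h using 1
  ring

end CommutingOperators

/-- Transfer to operators: for pairwise commuting endomorphisms `l, r, c` of a module, the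
divisibilities above hold in the commutative algebra generated by them, so every multiple of
`(l - c)(r - c)` kills a vector `d` which `(l - c)(r - c)` kills. -/
theorem commuting_operators_kill {K M : Type*} [Field K] [AddCommGroup M] [Module K M]
    (l r c : Module.End K M) (hlr : Commute l r) (hlc : Commute l c) (hrc : Commute r c)
    (d : M) (hd : ((l - c) * (r - c)) d = 0) (a b : ℕ) :
    ((l ^ a - c ^ a) * (r ^ a - c ^ a)) d = 0 ∧
    ((l ^ b - c ^ b) * (r ^ b - c ^ b) * (l ^ a + r ^ a - c ^ a)) d = 0 ∧
    ((l ^ b + r ^ b - c ^ b) * (l ^ a + r ^ a - c ^ a) -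
      (l ^ (a + b) + r ^ (a + b) - c ^ (a + b))) d = 0 := by
  have hcomm : ∀ x ∈ ({l, r, c} : Set (Module.End K M)), ∀ y ∈ ({l, r, c} : Set (Module.End K M)),
      x * y = y * x := by
    rintro x (rfl | rfl | rfl) y (rfl | rfl | rfl) <;>
      first | rfl | assumption | (symm; assumption)
  have : IsMulCommutative (Algebra.adjoin K ({l, r, c} : Set (Module.End K M))) :=
    Algebra.isMulCommutative_adjoin K hcomm
  let : CommRing (Algebra.adjoin K ({l, r, c} : Set (Module.End K M))) :=
    { (inferInstance : Ring (Algebra.adjoin K ({l, r, c} : Set (Module.End K M)))) with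
      mul_comm := mul_comm' }
  let φ : Algebra.adjoin K ({l, r, c} : Set (Module.End K M)) →+* Module.End K M :=
    (Algebra.adjoin K ({l, r, c} : Set (Module.End K M))).val.toRingHom
  obtain ⟨L, hL⟩ : ∃ L, φ L = l := ⟨⟨l, Algebra.subset_adjoin (by simp)⟩, rfl⟩
  obtain ⟨R, hR⟩ : ∃ R, φ R = r := ⟨⟨r, Algebra.subset_adjoin (by simp)⟩, rfl⟩
  obtain ⟨C, hC⟩ : ∃ C, φ C = c := ⟨⟨c, Algebra.subset_adjoin (by simp)⟩, rfl⟩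
  have key : ∀ p, (L - C) * (R - C) ∣ p → φ p d = 0 := by
    rintro _ ⟨q, rfl⟩
    rw [mul_comm, map_mul, Module.End.mul_apply]
    simp only [map_mul, map_sub, hL, hR, hC, hd, map_zero]
  refine ⟨?_, ?_, ?_⟩
  · simpa only [map_mul, map_sub, map_pow, hL, hR, hC] using key _ (sub_mul_sub_dvd_pow L R C a a)
  · simpa only [map_mul, map_sub, map_add, map_pow, hL, hR, hC] using
      key _ ((sub_mul_sub_dvd_pow L R C b b).mul_right (L ^ a + R ^ a - C ^ a))
  · simpa only [map_mul, map_sub, map_add, map_pow, hL, hR, hC] using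
      key _ (sub_mul_sub_dvd_deform L R C a b)

section Operators

variable {K : Type*} [Field K] {g : Type*} [AddCommGroup g] [Module K g]

/-- The operator `L : f ↦ (S ⊗ id) ∘ f` on `Hom(g, g ⊗ g)`. -/
def opL (S : g →ₗ[K] g) : Module.End K (g →ₗ[K] g ⊗[K] g) :=
  LinearMap.compRight K (LinearMap.rTensor g S)

/-- The operator `R : f ↦ (id ⊗ S) ∘ f` on `Hom(g, g ⊗ g)`. -/
def opR (S : g →ₗ[K] g) : Module.End K (g →ₗ[K] g ⊗[K] g) :=
  LinearMap.compRight K (LinearMap.lTensor g S)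

/-- The operator `C : f ↦ f ∘ S` on `Hom(g, g ⊗ g)`. -/
def opC (S : g →ₗ[K] g) : Module.End K (g →ₗ[K] g ⊗[K] g) :=
  LinearMap.lcomp K (g ⊗[K] g) S

theorem opL_apply (S : g →ₗ[K] g) (f : g →ₗ[K] g ⊗[K] g) (x : g) :
    opL S f x = LinearMap.rTensor g S (f x) := rfl

theorem opR_apply (S : g →ₗ[K] g) (f : g →ₗ[K] g ⊗[K] g) (x : g) :
    opR S f x = LinearMap.lTensor g S (f x) := rfl

theorem opC_apply (S : g →ₗ[K] g) (f : g →ₗ[K] g ⊗[K] g) (x : g) :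
    opC S f x = f (S x) := rfl

theorem rTensor_lTensor_apply (S T : g →ₗ[K] g) (t : g ⊗[K] g) :
    LinearMap.rTensor g S (LinearMap.lTensor g T t) = TensorProduct.map S T t := by
  rw [← LinearMap.comp_apply, LinearMap.rTensor_comp_lTensor]

theorem lTensor_rTensor_apply (S T : g →ₗ[K] g) (t : g ⊗[K] g) :
    LinearMap.lTensor g T (LinearMap.rTensor g S t) = TensorProduct.map S T t := by
  rw [← LinearMap.comp_apply, LinearMap.lTensor_comp_rTensor]

theorem opL_pow (S : g →ₗ[K] g) (n : ℕ) : opL S ^ n = opL (S ^ n) := by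
  induction n with
  | zero => ext f x; simp [opL_apply, Module.End.one_eq_id]
  | succ n ih =>
    ext f x
    simp [pow_succ, ih, opL_apply, LinearMap.rTensor_mul]

theorem opR_pow (S : g →ₗ[K] g) (n : ℕ) : opR S ^ n = opR (S ^ n) := by
  induction n with
  | zero => ext f x; simp [opR_apply, Module.End.one_eq_id]
  | succ n ih =>
    ext f x
    simp [pow_succ, ih, opR_apply, LinearMap.lTensor_mul]

theorem opC_pow (S : g →ₗ[K] g) (n : ℕ) : opC S ^ n = opC (S ^ n) := by
  induction n with
  | zero => ext f x; simp [opC_apply]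
  | succ n ih =>
    ext f x
    -- precomposition reverses the order of the factors
    rw [pow_succ, ih, pow_succ']
    simp only [opC_apply, Module.End.mul_apply]

theorem deformCo_eq (f : g →ₗ[K] g ⊗[K] g) (T : g →ₗ[K] g) :
    deformCo f T = (opL T + opR T - opC T) f := rfl

theorem isCoNijenhuis_iff (f : g →ₗ[K] g ⊗[K] g) (T : g →ₗ[K] g) :
    IsCoNijenhuis f T ↔ ((opL T - opC T) * (opR T - opC T)) f = 0 := by
  rw [IsCoNijenhuis, LinearMap.ext_iff]
  refine forall_congr' fun x => ?_
  simp only [Module.End.mul_apply, LinearMap.sub_apply, LinearMap.add_apply, opL_apply,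
    opR_apply, opC_apply, map_sub, rTensor_lTensor_apply, LinearMap.zero_apply]
  rw [← sub_eq_zero]
  refine Eq.congr ?_ rfl
  abel

end Operators

/-- For a Nijenhuis Lie coalgebra `(g, δ, S)` and naturals `a, b`:
(1) `S^a` is a Nijenhuis operator on `(g, δ)`;
(2) `S^b` is a Nijenhuis operator on the deformed Lie coalgebra `(g, δ_{S^a})`;
(3) `(δ_{S^a})_{S^b} = δ_{S^{a+b}}`. -/
theorem power_nijenhuis_lie_coalgebra
    {K : Type*} [Field K] {g : Type*} [AddCommGroup g] [Module K g]
    (δ : g →ₗ[K] g ⊗[K] g)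
    (hanti : ∀ x : g, δ x = - (TensorProduct.comm K g g) (δ x))
    (hcojac : ∀ x : g,
      (LinearMap.lTensor g δ) (δ x) + cyc K g ((LinearMap.lTensor g δ) (δ x)) +
        cyc K g (cyc K g ((LinearMap.lTensor g δ) (δ x))) = 0)
    (S : g →ₗ[K] g) (hS : IsCoNijenhuis δ S) (a b : ℕ) :
    IsCoNijenhuis δ (S ^ a) ∧
    IsCoNijenhuis (deformCo δ (S ^ a)) (S ^ b) ∧
    deformCo (deformCo δ (S ^ a)) (S ^ b) = deformCo δ (S ^ (a + b)) := by
  have hLR : Commute (opL S) (opR S) := by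
    ext f x
    simp only [Module.End.mul_apply, opL_apply, opR_apply, rTensor_lTensor_apply,
      lTensor_rTensor_apply]
  have hLC : Commute (opL S) (opC S) := rfl
  have hRC : Commute (opR S) (opC S) := rfl
  have h := commuting_operators_kill (opL S) (opR S) (opC S) hLR hLC hRC δ
    ((isCoNijenhuis_iff δ S).1 hS) a b
  simp only [opL_pow, opR_pow, opC_pow] at h
  obtain ⟨h1, h2, h3⟩ := h
  refine ⟨(isCoNijenhuis_iff _ _).2 h1, (isCoNijenhuis_iff _ _).2 h2, ?_⟩
  rw [LinearMap.sub_apply, sub_eq_zero] at h3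
  exact h3

end
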